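/- arXiv:1406.3844 — 2 statements merged into one kernel-verified Lean document; each statement's English description precedes it below -/
import Mathlib

section
/- For all integers p ≥ 2 and m ≥ 2, the distinguishing number of the circulant graph C(m,p) is strictly greater than m. -/
/-!
Adjacency in `C(m,p)` depends only on residues modulo `p`: the graph is the pullback of the
circulant graph `H` on `ℤ_p` with jumps `±1` along the reduction `π : ℤ_{mp} → ℤ_p`. Vertices in the
same fibre of a pullback are twins, so a labeling `c` that is distinguishing makes
`v ↦ (π v, c v)` injective. If this map were onto `ℤ_p × {labels}`, every automorphism of `H` would
lift through it to a label-preserving automorphism of `C(m,p)`; since `H` has nontrivial rotations,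
the map is not onto, and `m * p < p * r` for a distinguishing labeling with `r` labels.
-/

/-- A permutation of the vertices is a graph automorphism if it preserves adjacency. -/
def IsGraphAut {V : Type*} (G : SimpleGraph V) (σ : Equiv.Perm V) : Prop :=
  ∀ u v : V, G.Adj (σ u) (σ v) ↔ G.Adj u v

/-- A labeling with `r` labels is distinguishing if no nontrivial automorphism preserves it. -/
def IsDistinguishing {V : Type*} (G : SimpleGraph V) {r : ℕ} (c : V → Fin r) : Prop :=
  ∀ σ : Equiv.Perm V, IsGraphAut G σ → (∀ v, c (σ v) = c v) → σ = Equiv.refl V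

/-- The distinguishing number of a graph: the least `r` admitting an `r`-distinguishing
labeling. -/
noncomputable def distinguishingNumber {V : Type*} (G : SimpleGraph V) : ℕ :=
  sInf {r : ℕ | ∃ c : V → Fin r, IsDistinguishing G c}

/-- The jump set `A = {p-1+r·p, p+1+r·p : 0 ≤ r ≤ m-1}` inside `ℤ_{mp}`. -/
def jumpSet (m p : ℕ) : Set (ZMod (m * p)) :=
  {a | ∃ r < m, a = ((p - 1 + r * p : ℕ) : ZMod (m * p)) ∨
                a = ((p + 1 + r * p : ℕ) : ZMod (m * p))}

/-- The circulant graph `C(m,p)` on vertex set `ℤ_{mp}`: `i` and `j` are adjacent iff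
`j - i (mod mp)` lies in the jump set. -/
def circC (m p : ℕ) : SimpleGraph (ZMod (m * p)) :=
  SimpleGraph.circulantGraph (jumpSet m p)

/-- The set `M_i = {i + r·p : 0 ≤ r ≤ m-1}` in `ℤ_{mp}`. -/
def Mset (m p i : ℕ) : Set (ZMod (m * p)) :=
  {v | ∃ r < m, v = ((i + r * p : ℕ) : ZMod (m * p))}

section Labelings

variable {V W : Type*} {r : ℕ}

lemma isDistinguishing_of_injective (G : SimpleGraph V) {c : V → Fin r}
    (hc : Function.Injective c) : IsDistinguishing G c :=
  fun _ _ hσ => Equiv.ext fun v => hc (hσ v)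

lemma exists_isDistinguishing [Finite V] (G : SimpleGraph V) :
    ∃ c : V → Fin (distinguishingNumber G), IsDistinguishing G c :=
  Nat.sInf_mem (s := {r : ℕ | ∃ c : V → Fin r, IsDistinguishing G c})
    ⟨Nat.card V, Finite.equivFin V,
      isDistinguishing_of_injective G (Finite.equivFin V).injective⟩

lemma isGraphAut_refl (G : SimpleGraph V) : IsGraphAut G (Equiv.refl V) :=
  fun _ _ => Iff.rfl

variable {H : SimpleGraph W} {π : V → W} {c : V → Fin r}

lemma IsGraphAut.comap_of_semiconj {σ : Equiv.Perm V} {τ : Equiv.Perm W} (hτ : IsGraphAut H τ)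
    (hπ : Function.Semiconj π σ τ) : IsGraphAut (H.comap π) σ := by
  intro u v
  simpa only [SimpleGraph.comap_adj, hπ.eq] using hτ (π u) (π v)

lemma IsDistinguishing.injective_prodMk (hc : IsDistinguishing (H.comap π) c) :
    Function.Injective fun v => (π v, c v) := by
  classical
  intro u v huv
  obtain ⟨hπ, hlabel⟩ := Prod.mk.inj huv
  have haut : IsGraphAut (H.comap π) (Equiv.swap u v) :=
    (isGraphAut_refl H).comap_of_semiconj (Equiv.apply_swap_eq_self hπ)
  exact Equiv.swap_eq_refl_iff.mp (hc _ haut (Equiv.apply_swap_eq_self hlabel))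

lemma IsDistinguishing.eq_refl_of_surjective_prodMk [NeZero r]
    (hc : IsDistinguishing (H.comap π) c) (hsurj : Function.Surjective fun v => (π v, c v))
    {τ : Equiv.Perm W} (hτ : IsGraphAut H τ) : τ = Equiv.refl W := by
  let e : V ≃ W × Fin r := Equiv.ofBijective _ ⟨hc.injective_prodMk, hsurj⟩
  let σ : Equiv.Perm V := e.symm.permCongr (τ.prodCongr (Equiv.refl (Fin r)))
  have hσ (v : V) : (π (σ v), c (σ v)) = (τ (π v), c v) := e.apply_symm_apply (τ (π v), c v)
  have hπ : Function.Semiconj π σ τ := fun v => congrArg Prod.fst (hσ v)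
  have hσ_refl : σ = Equiv.refl V :=
    hc σ (hτ.comap_of_semiconj hπ) fun v => congrArg Prod.snd (hσ v)
  ext w
  obtain ⟨v, hv⟩ := hsurj (w, 0)
  obtain rfl : π v = w := congrArg Prod.fst hv
  rw [← hπ.eq, hσ_refl, Equiv.refl_apply, Equiv.refl_apply]

lemma IsDistinguishing.card_lt_card_mul [Nonempty V] [Finite W]
    (hc : IsDistinguishing (H.comap π) c) {τ : Equiv.Perm W} (hτ : IsGraphAut H τ)
    (hτ_ne : τ ≠ Equiv.refl W) : Nat.card V < Nat.card W * r := by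
  have : NeZero r := ‹Nonempty V›.elim fun v => (c v).neZero
  by_contra! hle
  have hbij : Function.Bijective fun v => (π v, c v) :=
    hc.injective_prodMk.bijective_of_nat_card_le (by rwa [Nat.card_prod, Nat.card_fin])
  exact hτ_ne (hc.eq_refl_of_surjective_prodMk hbij.surjective hτ)

lemma card_lt_card_mul_distinguishingNumber_comap [Finite V] [Nonempty V] [Finite W]
    (π : V → W) {τ : Equiv.Perm W} (hτ : IsGraphAut H τ) (hτ_ne : τ ≠ Equiv.refl W) :
    Nat.card V < Nat.card W * distinguishingNumber (H.comap π) := by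
  obtain ⟨c, hc⟩ := exists_isDistinguishing (H.comap π)
  exact hc.card_lt_card_mul hτ hτ_ne

end Labelings

section Circulant

variable {A B : Type*} [AddGroup A] [AddGroup B]

lemma circulantGraph_preimage (f : A →+ B) {s : Set B} (hs : 0 ∉ s) :
    SimpleGraph.circulantGraph (f ⁻¹' s) = (SimpleGraph.circulantGraph s).comap f := by
  ext u v
  have hne_of_mem : f u - f v ∈ s ∨ f v - f u ∈ s → f u ≠ f v := by
    intro hmem heq
    rw [heq, sub_self, or_self] at hmem
    exact hs hmem
  simp only [SimpleGraph.circulantGraph_adj, SimpleGraph.comap_adj, Set.mem_preimage, map_sub]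
  exact ⟨fun h => ⟨hne_of_mem h.2, h.2⟩, fun h => ⟨ne_of_apply_ne f h.1, h.2⟩⟩

lemma isGraphAut_circulantGraph_addRight (s : Set A) (a : A) :
    IsGraphAut (SimpleGraph.circulantGraph s) (Equiv.addRight a) :=
  fun _ _ => SimpleGraph.circulantGraph_adj_translate

end Circulant

section Residues

variable (m p : ℕ)

/-- Reduction modulo `p` from `ℤ_{mp}` to `ℤ_p`, along which `C(m,p)` is a pullback. -/
def residue : ZMod (m * p) →+* ZMod p :=
  ZMod.castHom (dvd_mul_left p m) (ZMod p)

lemma Mset_eq_preimage_residue [NeZero m] [NeZero p] (i : ℕ) :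
    Mset m p i = residue m p ⁻¹' {(i : ZMod p)} := by
  ext v
  constructor
  · rintro ⟨r, -, rfl⟩
    simp
  · intro hv
    set n := (v - i).val with hn
    have hvn : v = (i + n : ℕ) := by simp [hn]
    obtain ⟨r, hr⟩ : p ∣ n := by
      rw [← ZMod.natCast_eq_zero_iff, ← map_natCast (residue m p), hn, ZMod.natCast_zmod_val,
        map_sub, map_natCast, sub_eq_zero]
      exact hv
    refine ⟨r, ?_, by rw [hvn, hr, mul_comm p]⟩
    have hlt : n < m * p := ZMod.val_lt _
    rw [hr, mul_comm] at hlt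
    exact lt_of_mul_lt_mul_right hlt p.zero_le

lemma jumpSet_eq_union_Mset : jumpSet m p = Mset m p (p - 1) ∪ Mset m p (p + 1) := by
  ext a
  simp only [jumpSet, Mset, Set.mem_ofPred_eq, Set.mem_union, and_or_left, exists_or]

lemma jumpSet_eq_preimage_residue [NeZero m] [NeZero p] :
    jumpSet m p = residue m p ⁻¹' {-1, 1} := by
  have hpred : ((p - 1 : ℕ) : ZMod p) = -1 := by simp [Nat.cast_pred (NeZero.pos p)]
  have hsucc : ((p + 1 : ℕ) : ZMod p) = 1 := by simp
  rw [jumpSet_eq_union_Mset, Mset_eq_preimage_residue, Mset_eq_preimage_residue, hpred, hsucc,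
    ← Set.preimage_union, Set.singleton_union]

lemma circC_eq_comap_residue [NeZero m] [NeZero p] [Nontrivial (ZMod p)] :
    circC m p = (SimpleGraph.circulantGraph {-1, 1}).comap (residue m p) := by
  rw [circC, jumpSet_eq_preimage_residue]
  exact circulantGraph_preimage (residue m p).toAddMonoidHom (by simp)

end Residues

theorem stmt_6_general (m p : ℕ) (hm : 1 ≤ m) (hp : 2 ≤ p) :
    m < distinguishingNumber (circC m p) := by
  have : NeZero m := ⟨by lia⟩
  have : NeZero p := ⟨by lia⟩
  have : Fact (1 < p) := ⟨hp⟩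
  have hrot_ne : Equiv.addRight (1 : ZMod p) ≠ Equiv.refl (ZMod p) := by
    intro h
    simpa using Equiv.congr_fun h 0
  have hcard := card_lt_card_mul_distinguishingNumber_comap (residue m p)
    (isGraphAut_circulantGraph_addRight {-1, 1} 1) hrot_ne
  rw [← circC_eq_comap_residue, Nat.card_zmod, Nat.card_zmod, mul_comm p] at hcard
  exact lt_of_mul_lt_mul_right hcard p.zero_le

theorem stmt_6 (m p : ℕ) (hm : 2 ≤ m) (hp : 2 ≤ p) :
    m < distinguishingNumber (circC m p) :=
  stmt_6_general m p (by lia) hp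
end

section
/- Let m ≥ 2 and p ≥ 2 be integers and n = m·p. The map ψ : ℤ_n → ℤ_n defined by ψ(i + r·p) = (p − 1 − i) + r·p for 0 ≤ i ≤ p−1 and 0 ≤ r ≤ m−1 is an automorphism of the circulant graph C(m,p). -/
theorem isGraphAut_circulantGraph_preimage {G H : Type*} [AddGroup G] [AddCommGroup H]
    {f : G →+ H} {c : H} {σ : Equiv.Perm G} (hσ : ∀ v, f (σ v) = c - f v) (T : Set H) :
    IsGraphAut (SimpleGraph.circulantGraph (f ⁻¹' T)) σ := by
  intro u v
  have map_sub_swap (x y : G) : f (σ x - σ y) = f (y - x) := by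
    simp only [map_sub, hσ, sub_sub_sub_cancel_left]
  simp only [SimpleGraph.circulantGraph_adj, Set.mem_preimage, map_sub_swap, σ.injective.ne_iff,
    or_comm]

theorem zmod_finEquiv_apply (n : ℕ) [NeZero n] (x : Fin n) :
    ZMod.finEquiv n x = ((x : ℕ) : ZMod n) := by
  obtain _ | n := n
  · exact x.elim0
  · exact (Fin.cast_val_eq_self x).symm

section Blocks

variable (m p : ℕ)

/-- Reduction `ℤ_{mp} → ℤ_p`: adjacency in `C(m,p)` depends only on the images under this map. -/
def reduceMod : ZMod (m * p) →+* ZMod p :=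
  ZMod.castHom (dvd_mul_left p m) (ZMod p)

variable [NeZero m] [NeZero p]

theorem Mset_eq_preimage (c : ℕ) : Mset m p c = reduceMod m p ⁻¹' {(c : ZMod p)} := by
  ext v
  constructor
  · rintro ⟨r, -, rfl⟩
    simp
  · intro hv
    have dvd_val : p ∣ (v - c).val := by
      rw [← ZMod.natCast_eq_zero_iff, ← map_natCast (reduceMod m p), ZMod.natCast_zmod_val,
        map_sub, map_natCast, sub_eq_zero]
      exact hv
    obtain ⟨r, hr⟩ := dvd_val
    refine ⟨r, ?_, ?_⟩
    · have hlt := (v - c).val_lt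
      rw [hr, mul_comm m] at hlt
      exact Nat.lt_of_mul_lt_mul_left hlt
    · rw [Nat.cast_add, mul_comm r, ← hr, ZMod.natCast_zmod_val, add_sub_cancel]

theorem jumpSet_eq_preimage : jumpSet m p = reduceMod m p ⁻¹' {-1, 1} := by
  have jumpSet_eq_union : jumpSet m p = Mset m p (p - 1) ∪ Mset m p (p + 1) := by
    ext a
    simp only [jumpSet, Mset, Set.mem_union, Set.mem_ofPred_eq, and_or_left, exists_or]
  have cast_pred : ((p - 1 : ℕ) : ZMod p) = -1 := by
    rw [Nat.cast_pred (NeZero.pos p), ZMod.natCast_self, zero_sub]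
  have cast_succ : ((p + 1 : ℕ) : ZMod p) = 1 := by
    rw [Nat.cast_succ, ZMod.natCast_self, zero_add]
  rw [jumpSet_eq_union, Mset_eq_preimage, Mset_eq_preimage, cast_pred, cast_succ,
    ← Set.preimage_union, Set.singleton_union]

/-- The coordinates `(r, i) ↦ i + r * p` on `ℤ_{mp}`: `r` is the index of a block of `p`
consecutive residues and `i` the position in that block. -/
def blockEquiv : Fin m × Fin p ≃ ZMod (m * p) :=
  finProdFinEquiv.trans (ZMod.finEquiv (m * p)).toEquiv

theorem blockEquiv_apply (r : Fin m) (i : Fin p) :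
    blockEquiv m p (r, i) = ((i + r * p : ℕ) : ZMod (m * p)) := by
  simp only [blockEquiv, Equiv.trans_apply, RingEquiv.toEquiv_eq_coe, EquivLike.coe_coe,
    zmod_finEquiv_apply, finProdFinEquiv_apply_val, mul_comm p]

theorem reduceMod_blockEquiv (r : Fin m) (i : Fin p) :
    reduceMod m p (blockEquiv m p (r, i)) = ((i : ℕ) : ZMod p) := by
  simp [blockEquiv_apply]

/-- The map `ψ`, which reverses the order inside each block. -/
def blockReflect : Equiv.Perm (ZMod (m * p)) :=
  (blockEquiv m p).permCongr ((Equiv.refl (Fin m)).prodCongr Fin.revPerm)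

theorem blockReflect_blockEquiv (r : Fin m) (i : Fin p) :
    blockReflect m p (blockEquiv m p (r, i)) = blockEquiv m p (r, i.rev) := by
  simp [blockReflect]

theorem blockReflect_natCast {i r : ℕ} (hi : i < p) (hr : r < m) :
    blockReflect m p ((i + r * p : ℕ) : ZMod (m * p)) =
      ((p - 1 - i + r * p : ℕ) : ZMod (m * p)) := by
  have h := blockReflect_blockEquiv m p ⟨r, hr⟩ ⟨i, hi⟩
  rwa [blockEquiv_apply, blockEquiv_apply, Fin.val_rev, Nat.sub_add_eq, Nat.sub_right_comm] at h

theorem reduceMod_blockReflect (v : ZMod (m * p)) :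
    reduceMod m p (blockReflect m p v) = -1 - reduceMod m p v := by
  obtain ⟨⟨r, i⟩, rfl⟩ := (blockEquiv m p).surjective v
  rw [blockReflect_blockEquiv, reduceMod_blockEquiv, reduceMod_blockEquiv, Fin.val_rev,
    Nat.cast_sub i.isLt, Nat.cast_succ, ZMod.natCast_self]
  ring

theorem isGraphAut_blockReflect : IsGraphAut (circC m p) (blockReflect m p) := by
  rw [circC, jumpSet_eq_preimage]
  exact isGraphAut_circulantGraph_preimage (f := (reduceMod m p).toAddMonoidHom)
    (reduceMod_blockReflect m p) {-1, 1}

end Blocks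

theorem stmt_14 (m p : ℕ) (hm : 2 ≤ m) (hp : 2 ≤ p) :
    ∃ ψ : Equiv.Perm (ZMod (m * p)),
      (∀ i < p, ∀ r < m,
        ψ ((i + r * p : ℕ) : ZMod (m * p)) = ((p - 1 - i + r * p : ℕ) : ZMod (m * p))) ∧
      IsGraphAut (circC m p) ψ := by
  have : NeZero m := ⟨by lia⟩
  have : NeZero p := ⟨by lia⟩
  exact ⟨blockReflect m p, fun _ hi _ hr => blockReflect_natCast m p hi hr,
    isGraphAut_blockReflect m p⟩
end
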